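/- arXiv:1604.07245 — 3 statements merged into one kernel-verified Lean document; each statement's English description precedes it below -/
import Mathlib

section
/- ∫₀^{2π/3} (2 + cos t)/√((1 + cos t)(1 + 2cos t)) dt = √2 · π. (Consequently the surface-area integral 2√2 ∫₀^{2π/3} (2 + cos t)/√((1 + cos t)(1 + 2cos t)) dt equals 4π.) -/
open Real

lemma oloid_deriv (t : ℝ) (h0 : 0 < t) (h1 : t < 2 * π / 3) :
    HasDerivAt (fun t : ℝ => √2 * (arcsin (2 * sin (t/2) / √3) +
      arcsin (sin (t/2) / (√3 * cos (t/2)))))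
      ((2 + Real.cos t) / Real.sqrt ((1 + Real.cos t) * (1 + 2 * Real.cos t))) t := by
  have hc : 1/2 < cos (t/2) := by
    rw [← cos_pi_div_three]
    apply cos_lt_cos_of_nonneg_of_le_pi <;> linarith [pi_pos]
  have hs : 0 < sin (t/2) := by
    apply sin_pos_of_pos_of_lt_pi <;> linarith [pi_pos]
  have hsc := sin_sq_add_cos_sq (t/2)
  have hct : cos t = 2 * cos (t/2)^2 - 1 := by
    rw [← cos_two_mul]; congr 1; ring
  have hds : HasDerivAt (fun t : ℝ => sin (t/2)) (cos (t/2) * (1/2)) t :=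
    ((hasDerivAt_id t).div_const 2).sin
  have hdc : HasDerivAt (fun t : ℝ => cos (t/2)) (-sin (t/2) * (1/2)) t :=
    ((hasDerivAt_id t).div_const 2).cos
  rw [hct]
  set s := sin (t/2) with hsd
  set c := cos (t/2) with hcd
  have h3 : (√3)^2 = 3 := sq_sqrt (by norm_num)
  have h3p : 0 < √3 := by positivity
  have h2 : (√2)^2 = 2 := sq_sqrt (by norm_num)
  have h2p : 0 < √2 := by positivity
  have hcp : 0 < c := by linarith
  have hq : 0 < 4*c^2 - 1 := by nlinarith
  obtain ⟨r, hr⟩ : ∃ r, r = √(4*c^2-1) := ⟨_, rfl⟩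
  have hrp : 0 < r := by rw [hr]; exact sqrt_pos.2 hq
  have hr2 : r^2 = 4*c^2-1 := by rw [hr]; exact sq_sqrt hq.le
  have e1 : 1 - (2*s/√3)^2 = (r/√3)^2 := by
    rw [div_pow, div_pow, h3, hr2]; linarith
  have e2 : 1 - (s/(√3*c))^2 = (r/(√3*c))^2 := by
    rw [div_pow, div_pow, mul_pow, h3, hr2]; field_simp; linarith
  have p1 : 0 < (r/√3)^2 := by positivity
  have p2 : 0 < (r/(√3*c))^2 := by positivity
  have d1 := (hasDerivAt_arcsin (x := 2*s/√3) (by intro h; rw [h] at e1; nlinarith)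
    (by intro h; rw [h] at e1; nlinarith)).comp t ((hds.const_mul 2).div_const (√3))
  have d2 := (hasDerivAt_arcsin (x := s/(√3*c)) (by intro h; rw [h] at e2; nlinarith)
    (by intro h; rw [h] at e2; nlinarith)).comp t (hds.div (hdc.const_mul (√3)) (by positivity))
  have d := (d1.add d2).const_mul (√2)
  refine HasDerivAt.congr_deriv d ?_
  have e3 : (1 + (2*c^2-1)) * (1 + 2*(2*c^2-1)) = (√2*c*r)^2 := by
    rw [mul_pow, mul_pow, h2, hr2]; ring
  rw [e3, e1, e2, sqrt_sq (by positivity), sqrt_sq (by positivity), sqrt_sq (by positivity)]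
  rw [← hsd, ← hcd]
  have e4 : c * (1/2) * (√3 * c) - s * (√3 * (-s * (1/2))) = √3/2 := by
    linear_combination (√3/2) * hsc
  rw [e4]
  field_simp
  rw [h2]
  ring

/-- `∫₀^{2π/3} (2 + cos t)/√((1 + cos t)(1 + 2cos t)) dt = √2 · π`. -/
theorem integral_surface_oloid :
    ∫ t in (0:ℝ)..(2 * π / 3),
      (2 + Real.cos t) / Real.sqrt ((1 + Real.cos t) * (1 + 2 * Real.cos t))
      = Real.sqrt 2 * π := by
  have hab : (0:ℝ) ≤ 2 * π / 3 := by positivity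
  have hcont : ContinuousOn (fun t : ℝ => √2 * (arcsin (2 * sin (t/2) / √3) +
      arcsin (sin (t/2) / (√3 * cos (t/2))))) (Set.Icc 0 (2 * π / 3)) := by
    have : ContinuousOn (fun t : ℝ => sin (t/2) / (√3 * cos (t/2))) (Set.Icc 0 (2 * π / 3)) := by
      apply ContinuousOn.div (by fun_prop) (by fun_prop)
      intro x hx
      have : 0 < cos (x/2) := by
        apply cos_pos_of_mem_Ioo
        constructor <;> linarith [hx.1, hx.2, pi_pos]
      positivity
    exact continuousOn_const.mul ((Continuous.continuousOn
      (continuous_arcsin.comp (by fun_prop))).add (continuous_arcsin.comp_continuousOn this))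
  have hd := fun x (hx : x ∈ Set.Ioo 0 (2 * π / 3)) => oloid_deriv x hx.1 hx.2
  rw [intervalIntegral.integral_eq_sub_of_hasDerivAt_of_le hab hcont hd]
  · have : 2 * π / 3 / 2 = π / 3 := by ring
    have h3p : √3 ≠ 0 := by positivity
    have a1 : 2 * (√3/2) / √3 = 1 := by field_simp
    have a2 : (√3/2) / (√3 * (1/2)) = 1 := by field_simp
    simp only [this, sin_pi_div_three, cos_pi_div_three, a1, a2, arcsin_one]
    simp
  · apply (intervalIntegrable_iff_integrableOn_Ioc_of_le hab).2
    apply intervalIntegral.integrableOn_deriv_of_nonneg hcont hd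
    intro x hx
    have := neg_one_le_cos x
    exact div_nonneg (by linarith) (sqrt_nonneg _)
end

section
/- ∫₀^{2π/3} √(1 + 2cos t)/(1 + cos t)² dt = (1/3)·[ K(√3/2) + 2E(√3/2) ]. -/
open Real

noncomputable section

/-- Complete elliptic integral of the first kind `K(k)`. -/
def ellipticK (k : ℝ) : ℝ := ∫ x in (0:ℝ)..(π/2), 1 / Real.sqrt (1 - k^2 * Real.sin x ^ 2)

/-- Complete elliptic integral of the second kind `E(k)`. -/
def ellipticE (k : ℝ) : ℝ := ∫ x in (0:ℝ)..(π/2), Real.sqrt (1 - k^2 * Real.sin x ^ 2)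

def oD (x : ℝ) : ℝ := Real.sqrt (1 - (Real.sqrt 3 / 2)^2 * Real.sin x ^ 2)

lemma o_k : (Real.sqrt 3 / 2)^2 = 3/4 := by
  rw [div_pow, Real.sq_sqrt (by norm_num)]; norm_num

lemma o_pos (x : ℝ) : 0 < 1 - (Real.sqrt 3 / 2)^2 * Real.sin x ^ 2 := by
  rw [o_k]; nlinarith [Real.sin_sq_le_one x]

lemma oD_pos (x : ℝ) : 0 < oD x := Real.sqrt_pos.2 (o_pos x)

lemma oD_sq (x : ℝ) : oD x ^ 2 = 1 - 3/4 * Real.sin x ^ 2 := by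
  rw [oD, Real.sq_sqrt (o_pos x).le, o_k]

lemma oD_cont : Continuous oD := by unfold oD; fun_prop

lemma o_deriv (x : ℝ) : HasDerivAt (fun x => Real.sin x * Real.cos x * oD x)
    ((1/3) * (1 / oD x + 2 * oD x) - 3 * Real.sin x ^ 2 * oD x) x := by
  have h1 : HasDerivAt (fun x : ℝ => 1 - (Real.sqrt 3 / 2)^2 * Real.sin x ^ 2)
      (-((Real.sqrt 3 / 2)^2 * (2 * Real.sin x * Real.cos x))) x := by
    have := (((Real.hasDerivAt_sin x).pow 2).const_mul ((Real.sqrt 3 / 2)^2)).const_sub 1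
    refine this.congr_deriv ?_
    norm_num
  have h2 : HasDerivAt oD (-((Real.sqrt 3 / 2)^2 * (2 * Real.sin x * Real.cos x)) / (2 * oD x)) x :=
    h1.sqrt (o_pos x).ne'
  have h3 := ((Real.hasDerivAt_sin x).mul (Real.hasDerivAt_cos x)).mul h2
  refine h3.congr_deriv ?_
  have hp := (oD_pos x).ne'
  have hs := oD_sq x
  have hc := Real.cos_sq' x
  rw [o_k]
  simp only [Pi.mul_apply]
  field_simp
  have e : Real.cos x ^ 2 = 1 - Real.sin x ^ 2 := hc
  ring_nf
  try rw [hs]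
  try rw [e]
  ring

lemma o_ibp : ∫ x in (0:ℝ)..(π/2), 3 * Real.sin x ^ 2 * oD x
    = (1 / 3) * (ellipticK (Real.sqrt 3 / 2) + 2 * ellipticE (Real.sqrt 3 / 2)) := by
  have c0 := oD_cont
  have c1 : Continuous (fun x => 1 / oD x) :=
    continuous_const.div c0 (fun x => (oD_pos x).ne')
  have c2 : Continuous (fun x => 3 * Real.sin x ^ 2 * oD x) := by fun_prop
  have c3 : Continuous (fun x => 2 * oD x) := by fun_prop
  have c4 : Continuous (fun x => (1/3) * (1 / oD x + 2 * oD x)) :=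
    continuous_const.mul (c1.add c3)
  have h := intervalIntegral.integral_eq_sub_of_hasDerivAt (a := 0) (b := π/2)
    (fun x _ => o_deriv x) ((c4.sub c2).intervalIntegrable _ _)
  rw [intervalIntegral.integral_sub (c4.intervalIntegrable _ _) (c2.intervalIntegrable _ _),
    intervalIntegral.integral_const_mul,
    intervalIntegral.integral_add (c1.intervalIntegrable _ _) (c3.intervalIntegrable _ _),
    intervalIntegral.integral_const_mul] at h
  simp only [Real.sin_zero, Real.cos_pi_div_two, mul_zero, zero_mul, sub_zero] at h
  unfold ellipticK ellipticE
  unfold oD at *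
  linarith

lemma o_cos (x : ℝ) : Real.cos (2 * Real.arctan (Real.sqrt 3 * Real.cos x))
    = 1 / (2 * oD x ^ 2) - 1 := by
  rw [Real.cos_two_mul, Real.cos_sq_arctan, mul_pow, Real.sq_sqrt (by norm_num),
    Real.cos_sq', oD_sq]
  have : 0 < 1 - 3/4 * Real.sin x ^ 2 := by rw [← oD_sq]; exact pow_pos (oD_pos x) 2
  have e : 1 + 3 * (1 - Real.sin x ^ 2) = 4 * (1 - 3/4 * Real.sin x ^ 2) := by ring
  rw [e]
  field_simp
  ring

lemma o_point (x : ℝ) (h0 : 0 ≤ Real.sin x) :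
    Real.sqrt (1 + 2 * Real.cos (2 * Real.arctan (Real.sqrt 3 * Real.cos x))) /
      (1 + Real.cos (2 * Real.arctan (Real.sqrt 3 * Real.cos x))) ^ 2 *
      (2 * (1 / (1 + (Real.sqrt 3 * Real.cos x)^2) * (Real.sqrt 3 * -Real.sin x)))
    = - (3 * Real.sin x ^ 2 * oD x) := by
  have hp := oD_pos x
  have h3 : Real.sqrt 3 ^ 2 = 3 := Real.sq_sqrt (by norm_num)
  have hs : Real.sin x ^ 2 = 4/3 * (1 - oD x ^ 2) := by rw [oD_sq]; ring
  have e1 : Real.sqrt (1 + 2 * (1 / (2 * oD x ^ 2) - 1))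
      = Real.sqrt 3 * Real.sin x / (2 * oD x) := by
    have : 1 + 2 * (1 / (2 * oD x ^ 2) - 1) = (Real.sqrt 3 * Real.sin x / (2 * oD x)) ^ 2 := by
      rw [div_pow, mul_pow, h3, hs]
      field_simp
      ring
    rw [this, Real.sqrt_sq (by positivity)]
  have e2 : 1 + (Real.sqrt 3 * Real.cos x)^2 = 4 * oD x ^ 2 := by
    rw [mul_pow, h3, Real.cos_sq', oD_sq]; ring
  rw [o_cos, e1, e2]
  field_simp
  ring_nf
  try rw [h3]
  try ring

/-- `∫₀^{2π/3} √(1 + 2cos t)/(1 + cos t)² dt = (1/3)·[K(√3/2) + 2E(√3/2)]`. -/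
theorem integral_volume_oloid :
    ∫ t in (0:ℝ)..(2 * π / 3), Real.sqrt (1 + 2 * Real.cos t) / (1 + Real.cos t) ^ 2
      = (1 / 3) * (ellipticK (Real.sqrt 3 / 2) + 2 * ellipticE (Real.sqrt 3 / 2)) := by
  rw [← o_ibp]
  have hd : ∀ x : ℝ, HasDerivAt (fun x => 2 * Real.arctan (Real.sqrt 3 * Real.cos x))
      (2 * (1 / (1 + (Real.sqrt 3 * Real.cos x)^2) * (Real.sqrt 3 * -Real.sin x))) x := fun x =>
    (((Real.hasDerivAt_cos x).const_mul (Real.sqrt 3)).arctan).const_mul 2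
  have hsub := intervalIntegral.integral_comp_mul_deriv'' (a := 0) (b := π/2)
    (f := fun x => 2 * Real.arctan (Real.sqrt 3 * Real.cos x))
    (f' := fun x => 2 * (1 / (1 + (Real.sqrt 3 * Real.cos x)^2) * (Real.sqrt 3 * -Real.sin x)))
    (g := fun t => Real.sqrt (1 + 2 * Real.cos t) / (1 + Real.cos t) ^ 2)
    (fun x _ => (hd x).continuousAt.continuousWithinAt)
    (fun x _ => (hd x).hasDerivWithinAt)
    (by
      apply Continuous.continuousOn
      have : Continuous fun x : ℝ => 1 / (1 + (Real.sqrt 3 * Real.cos x)^2) :=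
        continuous_const.div (by fun_prop) (fun x => by positivity)
      fun_prop)
    (by
      rintro _ ⟨x, _, rfl⟩
      apply ContinuousAt.continuousWithinAt
      apply ContinuousAt.div (by fun_prop) (by fun_prop)
      have := oD_pos x
      simp only [o_cos]
      rw [add_sub_cancel]
      positivity)
  have e3 : Real.arctan (Real.sqrt 3) = π / 3 := by
    rw [← Real.tan_pi_div_three]
    exact Real.arctan_tan (by linarith [Real.pi_pos]) (by linarith [Real.pi_pos])
  simp only [Real.cos_zero, Real.cos_pi_div_two, mul_one, mul_zero, Real.arctan_zero, e3,
    Function.comp] at hsub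
  rw [intervalIntegral.integral_symm, mul_div_assoc, ← hsub, ← intervalIntegral.integral_neg]
  apply intervalIntegral.integral_congr
  intro x hx
  rw [Set.uIcc_of_le (by positivity)] at hx
  have := o_point x (Real.sin_nonneg_of_nonneg_of_le_pi hx.1 (by linarith [hx.2, Real.pi_pos]))
  simp only at this ⊢
  rw [this, neg_neg]
end
end

section
/- ∫₀^{2π/3} arccos( −cos t/(1 + cos t) ) dt = 3π²/4 − 2I, where I = ∫₀^{π/2} arccos( cos t/(1 + cos t) ) dt. Equivalently, ∫_{−2π/3}^{2π/3} arccos( −cos t/(1 + cos t) ) dt = 3π²/2 − 4I. -/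
open Real

noncomputable section

/-- The constant `I = ∫₀^{π/2} arccos(cos x/(1+cos x)) dx`. -/
def constI : ℝ := ∫ x in (0:ℝ)..(π/2), Real.arccos (Real.cos x / (1 + Real.cos x))

def gE (t : ℝ) : ℝ := Real.arccos (-(Real.cos t) / (1 + Real.cos t))

def gE' (t : ℝ) : ℝ :=
  -(1 / √(1 - (-(Real.cos t) / (1 + Real.cos t)) ^ 2)) * (Real.sin t / (1 + Real.cos t) ^ 2)

lemma gE_contAt {t : ℝ} (h : 0 < 1 + Real.cos t) : ContinuousAt gE t := by
  unfold gE
  exact Real.continuous_arccos.continuousAt.comp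
    (Real.continuous_cos.neg.continuousAt.div
      (continuous_const.add Real.continuous_cos).continuousAt h.ne')

lemma u_bd {t : ℝ} (h : 0 ≤ Real.cos t) :
    -(1/2) ≤ -(Real.cos t) / (1 + Real.cos t) ∧ -(Real.cos t) / (1 + Real.cos t) ≤ 0 := by
  have h1 := Real.cos_le_one t
  constructor
  · rw [le_div_iff₀ (by linarith)]; linarith
  · rw [div_le_iff₀ (by linarith)]; linarith

lemma u_sq {t : ℝ} (h : 0 ≤ Real.cos t) :
    0 < 1 - (-(Real.cos t) / (1 + Real.cos t)) ^ 2 := by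
  obtain ⟨h1, h2⟩ := u_bd h
  nlinarith

lemma cos_gE {t : ℝ} (h : 0 ≤ Real.cos t) :
    Real.cos (gE t) = -(Real.cos t) / (1 + Real.cos t) := by
  obtain ⟨h1, h2⟩ := u_bd h
  exact Real.cos_arccos (by linarith) (by linarith)

lemma gE_gE {t : ℝ} (h : 0 ≤ Real.cos t) (h0 : 0 ≤ t) (hp : t ≤ π) : gE (gE t) = t := by
  have e : -(Real.cos (gE t)) / (1 + Real.cos (gE t)) = Real.cos t := by
    rw [cos_gE h]
    have : 1 + Real.cos t ≠ 0 := by linarith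
    have h2 : 1 + -(Real.cos t) / (1 + Real.cos t) = 1 / (1 + Real.cos t) := by
      field_simp; ring
    rw [h2]; field_simp
  rw [gE, e, Real.arccos_cos h0 hp]

lemma gE_deriv {t : ℝ} (h : 0 ≤ Real.cos t) : HasDerivAt gE (gE' t) t := by
  obtain ⟨h1, h2⟩ := u_bd h
  have hn : 1 + Real.cos t ≠ 0 := by linarith
  have hu : HasDerivAt (fun t => -(Real.cos t) / (1 + Real.cos t))
      (Real.sin t / (1 + Real.cos t) ^ 2) t := by
    have := (Real.hasDerivAt_cos t).neg.div ((Real.hasDerivAt_cos t).const_add 1) hn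
    refine HasDerivAt.congr_deriv this ?_
    simp only [Pi.neg_apply]
    congr 1
    ring
  exact (Real.hasDerivAt_arccos (by linarith) (by linarith)).comp t hu

lemma gE'_cont {t : ℝ} (h : 0 ≤ Real.cos t) : ContinuousAt gE' t := by
  have hn : 1 + Real.cos t ≠ 0 := by linarith
  have hs : √(1 - (-(Real.cos t) / (1 + Real.cos t)) ^ 2) ≠ 0 :=
    (Real.sqrt_pos.2 (u_sq h)).ne'
  have hn2 : (1 + Real.cos t) ^ 2 ≠ 0 := pow_ne_zero _ hn
  unfold gE'
  fun_prop (disch := assumption)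

lemma cos_23 : Real.cos (2 * π / 3) = -(1/2) := by
  rw [show 2 * π / 3 = π - π / 3 by ring, Real.cos_pi_sub, Real.cos_pi_div_three]

lemma gE_zero : gE 0 = 2 * π / 3 := by
  have hp := Real.pi_pos
  rw [gE, Real.cos_zero, ← Real.arccos_cos (x := 2 * π / 3) (by linarith) (by linarith), cos_23]
  norm_num

lemma gE_half : gE (π / 2) = π / 2 := by
  simp [gE]

lemma cos_nn {t : ℝ} (h : t ∈ Set.uIcc 0 (π / 2)) : 0 ≤ Real.cos t ∧ 0 ≤ t ∧ t ≤ π := by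
  have hp := Real.pi_pos
  rw [Set.uIcc_of_le (by linarith)] at h
  exact ⟨Real.cos_nonneg_of_mem_Icc ⟨by linarith [h.1], h.2⟩, h.1, by linarith [h.2]⟩

lemma first_part : ∫ t in (0:ℝ)..(π/2), gE t = π ^ 2 / 2 - constI := by
  have e : ∀ t, gE t = π - Real.arccos (Real.cos t / (1 + Real.cos t)) := by
    intro t; rw [gE, neg_div, Real.arccos_neg]
  have hi : IntervalIntegrable gE MeasureTheory.volume 0 (π/2) :=
    ContinuousOn.intervalIntegrable fun t ht =>
      (gE_contAt (by linarith [(cos_nn ht).1])).continuousWithinAt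
  have : constI = ∫ t in (0:ℝ)..(π/2), (π - gE t) := by
    unfold constI
    congr 1; ext t; rw [e]; ring
  rw [this, intervalIntegral.integral_sub (by simp) hi, intervalIntegral.integral_const]
  simp only [smul_eq_mul]; ring

lemma second_part : ∫ t in (π/2)..(2 * π / 3), gE t = (∫ t in (0:ℝ)..(π/2), gE t) - π ^ 2 / 4 := by
  have hc' : ContinuousOn gE' (Set.uIcc 0 (π/2)) := fun t ht =>
    (gE'_cont (cos_nn ht).1).continuousWithinAt
  have h1 := intervalIntegral.integral_comp_mul_deriv' (a := 0) (b := π/2) (f := gE) (f' := gE')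
    (g := gE) (fun t ht => gE_deriv (cos_nn ht).1) hc' (by
      rintro _ ⟨t, ht, rfl⟩
      refine (gE_contAt ?_).continuousWithinAt
      rw [cos_gE (cos_nn ht).1]
      linarith [(u_bd (cos_nn ht).1).1])
  have h2 : ∫ t in (0:ℝ)..(π/2), (gE ∘ gE) t * gE' t = ∫ t in (0:ℝ)..(π/2), t * gE' t := by
    apply intervalIntegral.integral_congr
    intro t ht
    obtain ⟨a, b, c⟩ := cos_nn ht
    simp only [Function.comp, gE_gE a b c]
  have h3 := intervalIntegral.integral_mul_deriv_eq_deriv_mul (a := 0) (b := π/2)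
    (u := fun t => t) (u' := fun _ => 1) (v := gE) (v' := gE')
    (fun t _ => hasDerivAt_id t) (fun t ht => gE_deriv (cos_nn ht).1) (by simp)
    hc'.intervalIntegrable
  rw [h2, h3, gE_zero, gE_half] at h1
  rw [intervalIntegral.integral_symm, ← h1]
  simp only [one_mul]; ring

lemma pos_cos {t : ℝ} (h0 : 0 ≤ t) (h : t ≤ 2 * π / 3) : 0 < 1 + Real.cos t := by
  have hp := Real.pi_pos
  have := Real.cos_le_cos_of_nonneg_of_le_pi h0 (by linarith) h
  rw [cos_23] at this; linarith

lemma gE_int {a b : ℝ} (ha : 0 ≤ a) (hab : a ≤ b) (h : b ≤ 2 * π / 3) :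
    IntervalIntegrable gE MeasureTheory.volume a b := by
  apply ContinuousOn.intervalIntegrable
  intro t ht
  rw [Set.uIcc_of_le hab] at ht
  exact (gE_contAt (pos_cos (ha.trans ht.1) (ht.2.trans h))).continuousWithinAt

lemma gE_neg (t : ℝ) : gE (-t) = gE t := by simp [gE]

lemma half_int : ∫ t in (0:ℝ)..(2 * π / 3), gE t = 3 * π ^ 2 / 4 - 2 * constI := by
  have hp := Real.pi_pos
  rw [← intervalIntegral.integral_add_adjacent_intervals
    (gE_int (a := 0) (b := π/2) le_rfl (by linarith) (by linarith))
    (gE_int (by linarith) (by linarith) le_rfl), second_part, first_part]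
  ring

lemma neg_half : ∫ t in (-(2 * π / 3))..0, gE t = ∫ t in (0:ℝ)..(2 * π / 3), gE t := by
  have := intervalIntegral.integral_comp_neg (a := 0) (b := 2 * π / 3) gE
  simp only [gE_neg, neg_zero] at this
  exact this.symm

lemma full_int : ∫ t in (-(2 * π / 3))..(2 * π / 3), gE t = 3 * π ^ 2 / 2 - 4 * constI := by
  have hp := Real.pi_pos
  have hi := gE_int (a := 0) (b := 2 * π / 3) le_rfl (by linarith) le_rfl
  have hi2 : IntervalIntegrable gE MeasureTheory.volume (-(2 * π / 3)) 0 := by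
    apply ContinuousOn.intervalIntegrable
    intro t ht
    rw [Set.uIcc_of_le (by linarith)] at ht
    refine (gE_contAt ?_).continuousWithinAt
    rw [← Real.cos_neg]
    exact pos_cos (by linarith [ht.2]) (by linarith [ht.1])
  rw [← intervalIntegral.integral_add_adjacent_intervals hi2 hi, neg_half, half_int]
  ring

/-- `∫₀^{2π/3} arccos(−cos t/(1 + cos t)) dt = 3π²/4 − 2I`, and equivalently
`∫_{−2π/3}^{2π/3} arccos(−cos t/(1 + cos t)) dt = 3π²/2 − 4I`. -/
theorem integral_arccos_edge :
    (∫ t in (0:ℝ)..(2 * π / 3), Real.arccos (-(Real.cos t) / (1 + Real.cos t))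
      = 3 * π ^ 2 / 4 - 2 * constI) ∧
    (∫ t in (-(2 * π / 3))..(2 * π / 3), Real.arccos (-(Real.cos t) / (1 + Real.cos t))
      = 3 * π ^ 2 / 2 - 4 * constI) := by
  exact ⟨half_int, full_int⟩
end
end
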